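/- Let χ : K^× → ℤ/2ℤ be a group homomorphism whose kernel equals the norm group N_{L|K}(L^×), and let n ≥ 1 be such that χ vanishes on U_{n+1} but does not vanish identically on U_n. If e₁/e₂ ∈ U_{2n+1} (i.e. e₁ ≡ e₂ mod 𝔭^{2n+1}) and χ(e₁) = 1, then the subgroup of (ℤ/2ℤ)² generated by the set Im equals all of (ℤ/2ℤ)². -/

import Mathlib

/-- An additively written, normalized (i.e. surjective onto `ℤ`) discrete
valuation on a field `K`.  All axioms are imposed at nonzero arguments only,
so the value of `v` at `0` is irrelevant.  For a finite extension `K` of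
`ℚ_[p]`, the normalized valuation `v : K^× → ℤ` of the paper is such a
structure. -/
structure DValuation (K : Type*) [Field K] where
  /-- the valuation map -/
  v : K → ℤ
  v_mul : ∀ ⦃x y : K⦄, x ≠ 0 → y ≠ 0 → v (x * y) = v x + v y
  min_le_v_add : ∀ ⦃x y : K⦄, x ≠ 0 → y ≠ 0 → x + y ≠ 0 → min (v x) (v y) ≤ v (x + y)
  v_surj : ∀ m : ℤ, ∃ x : K, x ≠ 0 ∧ v x = m

namespace DValuation

variable {K : Type*} [Field K] (w : DValuation K)

/-- `u ∈ U_m` : `u` is (a unit) congruent to `1` modulo `𝔭^m`; for `m ≥ 1`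
this forces `v u = 0`, i.e. `u ∈ 𝔬^×`. -/
def IsUnit₁ (m : ℤ) (u : K) : Prop :=
  u = 1 ∨ m ≤ w.v (u - 1)

end DValuation

/-! Let `γ < 1` be the value such that `χ` is trivial on `1 + {v < γ}` but not on `1 + {v ≤ γ}`.
Multiplying by an element of `1 + {v < γ}` does not change `χ`, so `χ e₂ = χ e₁ = 1` and the pair
attached to `x = e₂` has first coordinate `1`: only `(0, 1)` is missing. If `χ (-1) = 0`, it is
attached to `x = 0`. If `χ (-1) = 1`, pick `s` with `v s = γ` and `χ (1 + s) = 1`; as `v 2 < 1`,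
`χ (1 - s) = 1` too, while `χ (-s) ≠ χ s`, so one may take `χ s = 0`. Then `x = e₂ (1 + s)` has
`χ x = 0`, and `x - e₁`, `x - e₂ = e₂ s` differ by a factor in `1 + {v < γ}`, so both have
`χ = 1`. -/

namespace DValuation

open WithZero

variable {K : Type*} [Field K] (w : DValuation K)

lemma v_one : w.v 1 = 0 := by
  simpa using w.v_mul (one_ne_zero (α := K)) one_ne_zero

open Classical in
/-- The multiplicative valuation `x ↦ exp (-v x)` attached to `w`, with value `0` at `0`, which
makes the theory of `Valuation` available. -/
noncomputable def toValuation : Valuation K ℤᵐ⁰ where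
  toFun x := if x = 0 then 0 else exp (-w.v x)
  map_zero' := if_pos rfl
  map_one' := by simp [v_one]
  map_mul' x y := by
    by_cases hx : x = 0
    · simp [hx]
    by_cases hy : y = 0
    · simp [hy]
    simp [hx, hy, w.v_mul hx hy, mul_comm]
  map_add_le_max' x y := by
    by_cases hx : x = 0
    · simp [hx]
    by_cases hy : y = 0
    · simp [hy]
    by_cases hxy : x + y = 0
    · simp [hxy]
    have hmin := w.min_le_v_add hx hy hxy
    simp only [hx, hy, hxy, if_false, le_max_iff, exp_le_exp]
    omega

lemma toValuation_apply {x : K} (hx : x ≠ 0) : w.toValuation x = exp (-w.v x) :=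
  if_neg hx

variable {w}

lemma isUnit₁_iff_toValuation_le {m : ℤ} {u : K} :
    w.IsUnit₁ m u ↔ w.toValuation (u - 1) ≤ exp (-m) := by
  by_cases hu : u = 1
  · simp [IsUnit₁, hu]
  · simp only [IsUnit₁, hu, false_or, w.toValuation_apply (sub_ne_zero.2 hu), exp_le_exp,
      neg_le_neg_iff]

lemma isUnit₁_add_one_iff_toValuation_lt {m : ℤ} {u : K} :
    w.IsUnit₁ (m + 1) u ↔ w.toValuation (u - 1) < exp (-m) := by
  rw [isUnit₁_iff_toValuation_le, neg_add, ← lt_mul_exp_iff_le exp_ne_zero, ← exp_add,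
    neg_add_cancel_right]

lemma isUnit₁_add_one_div_iff {m : ℤ} {x y : K} (hy : y ≠ 0) :
    w.IsUnit₁ (m + 1) (x / y) ↔ w.toValuation (x - y) < exp (-m) * w.toValuation y := by
  rw [isUnit₁_add_one_iff_toValuation_lt, div_sub_one hy, map_div₀,
    div_lt_iff₀ (w.toValuation.pos_iff.2 hy)]

lemma IsUnit₁.ne_zero {m : ℤ} (hm : 0 < m) {u : K} (hu : w.IsUnit₁ m u) : u ≠ 0 := by
  rintro rfl
  rw [isUnit₁_iff_toValuation_le, zero_sub, Valuation.map_neg, map_one, ← exp_zero, exp_le_exp]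
    at hu
  omega

/-- A nontrivial valuation of `K` cannot be trivial on `ℚ_[p]`, over which `K` is algebraic, so the
ramification index `v p` does not vanish. -/
lemma toValuation_natCast_lt_one {p : ℕ} [Fact p.Prime] [Algebra ℚ_[p] K]
    [Algebra.IsAlgebraic ℚ_[p] K]
    (hext : ∀ x : ℚ_[p], x ≠ 0 →
      w.v (algebraMap ℚ_[p] K x) = w.v (algebraMap ℚ_[p] K p) * x.valuation) :
    w.toValuation (p : K) < 1 := by
  refine lt_of_le_of_ne (natCast_mem w.toValuation.integer p) fun hp => ?_
  have hp0 : (p : K) ≠ 0 := w.toValuation.ne_zero_iff.1 (hp ▸ one_ne_zero)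
  have hvp : w.v (p : K) = 0 := by simpa [w.toValuation_apply hp0, -exp_neg] using hp
  have : w.toValuation.IsTrivialOn ℚ_[p] := ⟨fun a ha => by
    simp [w.toValuation_apply, ha, hext a ha, hvp]⟩
  obtain ⟨x, hx0, hx⟩ := w.v_surj 1
  refine w.toValuation.transcendental_of_ne_one (A := ℚ_[p]) x hx0 ?_
    (Algebra.IsAlgebraic.isAlgebraic x)
  simp [w.toValuation_apply hx0, hx, -exp_neg]

end DValuation

lemma addSubgroup_zmod_prod_eq_top {m n : ℕ} {H : AddSubgroup (ZMod m × ZMod n)} {a : ZMod n}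
    (h₁ : (1, a) ∈ H) (h₂ : (0, 1) ∈ H) : H = ⊤ := by
  refine eq_top_iff.2 fun ⟨x, y⟩ _ => ?_
  obtain ⟨i, rfl⟩ := ZMod.intCast_surjective x
  obtain ⟨j, hj⟩ := ZMod.intCast_surjective (y - (i : ZMod n) * a)
  have hxy : ((i : ZMod m), y) = i • (1, a) + j • (0, 1) := by simp [hj]
  exact hxy ▸ H.add_mem (H.zsmul_mem h₁ i) (H.zsmul_mem h₂ j)

section Descent

variable {K : Type*} [Field K]

/-- The set `Im` of the descent. When `χ` is the norm residue character of `K(√d)`, the condition on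
`x` says that the Châtelet surface `y² - d z² = x (x - e₁) (x - e₂)` has a rational point above `x`,
and `(χ x, χ (x - e₁))` is its descent invariant. The four listed pairs are the invariants above
`x = ∞, 0, e₁, e₂`, where that formula is undefined. -/
def descentImage (χ : K → ZMod 2) (e₁ e₂ : K) : Set (ZMod 2 × ZMod 2) :=
  {(0, 0), (χ (e₁ * e₂), χ (-e₁)), (χ e₁, χ (e₁ * (e₁ - e₂))), (χ e₂, χ (e₂ - e₁))} ∪
    {p | ∃ x : K, x ≠ 0 ∧ x ≠ e₁ ∧ x ≠ e₂ ∧ χ (x * (x - e₁) * (x - e₂)) = 0 ∧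
      p = (χ x, χ (x - e₁))}

variable {Γ₀ : Type*} [LinearOrderedCommGroupWithZero Γ₀] {v : Valuation K Γ₀} {γ : Γ₀}

lemma map_neg_eq_add {R A : Type*} [Ring R] [Nontrivial R] [Add A] {χ : R → A}
    (hχ : ∀ ⦃x y : R⦄, x ≠ 0 → y ≠ 0 → χ (x * y) = χ x + χ y) {x : R} (hx : x ≠ 0) :
    χ (-x) = χ (-1) + χ x := by
  rw [← hχ (neg_ne_zero.2 one_ne_zero) hx, neg_one_mul]

lemma ne_zero_and_ne_zero_of_valuation_sub_lt {R : Type*} [Ring R] {v : Valuation R Γ₀} {x y : R}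
    (hγ : γ ≤ 1) (h : v (x - y) < γ * v y) : x ≠ 0 ∧ y ≠ 0 := by
  constructor
  · rintro rfl
    rw [zero_sub, v.map_neg] at h
    exact h.not_ge (mul_le_of_le_one_left' hγ)
  · rintro rfl
    simp at h

lemma map_eq_map_of_valuation_sub_lt {A : Type*} [AddZeroClass A] {χ : K → A}
    (hχ : ∀ ⦃x y : K⦄, x ≠ 0 → y ≠ 0 → χ (x * y) = χ x + χ y) (hγ : γ ≤ 1)
    (hvan : ∀ u, v (u - 1) < γ → χ u = 0) {x y : K} (h : v (x - y) < γ * v y) :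
    χ x = χ y := by
  obtain ⟨hx, hy⟩ := ne_zero_and_ne_zero_of_valuation_sub_lt hγ h
  have hxy : χ (x / y) = 0 := hvan _ <| by
    rwa [div_sub_one hy, map_div₀, div_lt_iff₀ (v.pos_iff.2 hy)]
  rw [← div_mul_cancel₀ x hy, hχ (div_ne_zero hx hy) hy, hxy, zero_add]

variable {χ : K → ZMod 2}

lemma exists_valuation_eq_and_map_one_add_eq_one_and_map_eq_zero
    (hχ : ∀ ⦃x y : K⦄, x ≠ 0 → y ≠ 0 → χ (x * y) = χ x + χ y) (h2 : v 2 < 1) (hγ : γ < 1)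
    (hvan : ∀ u, v (u - 1) < γ → χ u = 0) (hnonvan : ∃ u, v (u - 1) ≤ γ ∧ χ u ≠ 0)
    (hneg : χ (-1) = 1) :
    ∃ s, v s = γ ∧ χ (1 + s) = 1 ∧ χ s = 0 := by
  obtain ⟨u, hu, hχu⟩ := hnonvan
  obtain ⟨s, rfl⟩ : ∃ s, u = 1 + s := ⟨u - 1, by ring⟩
  have hs : v s = γ :=
    le_antisymm (by simpa using hu) (not_lt.1 fun h => hχu (hvan _ (by simpa using h)))
  have hχ1 : χ (1 + s) = 1 := Fin.eq_one_of_ne_zero _ hχu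
  have hs0 : s ≠ 0 := by
    rintro rfl
    exact hχu (by simpa using hχ (one_ne_zero (α := K)) one_ne_zero)
  have hγ0 : 0 < γ := hs ▸ v.pos_iff.2 hs0
  rcases eq_or_ne (χ s) 0 with hχs | hχs
  · exact ⟨s, hs, hχ1, hχs⟩
  have hχs1 : χ s = 1 := Fin.eq_one_of_ne_zero _ hχs
  refine ⟨-s, by rw [v.map_neg, hs], ?_, ?_⟩
  · have hclose : v (1 + -s - (1 + s)) < γ * v (1 + s) := by
      rw [v.map_one_add_of_lt (hs.trans_lt hγ), mul_one,
        show 1 + -s - (1 + s) = -(2 * s) by ring, v.map_neg, map_mul, hs]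
      exact mul_lt_of_lt_one_left hγ0 h2
    rw [map_eq_map_of_valuation_sub_lt hχ hγ.le hvan hclose, hχ1]
  · rw [map_neg_eq_add hχ hs0, hneg, hχs1, CharTwo.add_self_eq_zero]

lemma zero_one_mem_descentImage_of_map_one_add_eq_one
    (hχ : ∀ ⦃x y : K⦄, x ≠ 0 → y ≠ 0 → χ (x * y) = χ x + χ y) (hγ : γ < 1)
    (hvan : ∀ u, v (u - 1) < γ → χ u = 0) {e₁ e₂ s : K} (hcong : v (e₁ - e₂) < γ ^ 2 * v e₂)
    (hχe₂ : χ e₂ = 1) (hs : v s = γ) (hχ1 : χ (1 + s) = 1) (hχs : χ s = 0) :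
    (0, 1) ∈ descentImage χ e₁ e₂ := by
  have he₂ : e₂ ≠ 0 := (ne_zero_and_ne_zero_of_valuation_sub_lt (pow_le_one' hγ.le 2) hcong).2
  have hs0 : s ≠ 0 := by
    rintro rfl
    simp [← hs] at hcong
  have hes0 : e₂ * s ≠ 0 := mul_ne_zero he₂ hs0
  have h1s : 1 + s ≠ 0 := v.ne_zero_iff.1 <| by
    rw [v.map_one_add_of_lt (hs.trans_lt hγ)]; exact one_ne_zero
  have hx0 : e₂ * (1 + s) ≠ 0 := mul_ne_zero he₂ h1s
  have hχx : χ (e₂ * (1 + s)) = 0 := by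
    rw [hχ he₂ h1s, hχe₂, hχ1, CharTwo.add_self_eq_zero]
  have hsub₂ : e₂ * (1 + s) - e₂ = e₂ * s := by ring
  have hχsub₂ : χ (e₂ * s) = 1 := by rw [hχ he₂ hs0, hχe₂, hχs, add_zero]
  have hclose : v (e₂ * (1 + s) - e₁ - e₂ * s) < γ * v (e₂ * s) := by
    rw [show e₂ * (1 + s) - e₁ - e₂ * s = e₂ - e₁ by ring, v.map_sub_swap, map_mul, hs]
    exact hcong.trans_eq (by rw [sq, mul_assoc, mul_comm (v e₂)])
  have hsub₁ : e₂ * (1 + s) - e₁ ≠ 0 := (ne_zero_and_ne_zero_of_valuation_sub_lt hγ.le hclose).1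
  have hχsub₁ : χ (e₂ * (1 + s) - e₁) = 1 :=
    (map_eq_map_of_valuation_sub_lt hχ hγ.le hvan hclose).trans hχsub₂
  refine Or.inr ⟨e₂ * (1 + s), hx0, sub_ne_zero.1 hsub₁, sub_ne_zero.1 (hsub₂ ▸ hes0), ?_, ?_⟩
  · rw [hsub₂, hχ (mul_ne_zero hx0 hsub₁) hes0, hχ hx0 hsub₁, hχx, hχsub₁, hχsub₂, zero_add,
      CharTwo.add_self_eq_zero]
  · rw [hχx, hχsub₁]

theorem chatelet_descent_image_case_ii_general
    (hχ : ∀ ⦃x y : K⦄, x ≠ 0 → y ≠ 0 → χ (x * y) = χ x + χ y) (h2 : v 2 < 1) (hγ : γ < 1)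
    (hvan : ∀ u, v (u - 1) < γ → χ u = 0) (hnonvan : ∃ u, v (u - 1) ≤ γ ∧ χ u ≠ 0)
    {e₁ e₂ : K} (_hee : e₁ ≠ e₂) (hcong : v (e₁ - e₂) < γ ^ 2 * v e₂) (hχe₁ : χ e₁ = 1) :
    AddSubgroup.closure (descentImage χ e₁ e₂) = ⊤ := by
  obtain ⟨he₁, he₂⟩ := ne_zero_and_ne_zero_of_valuation_sub_lt (pow_le_one' hγ.le 2) hcong
  have hχe₂ : χ e₂ = 1 := by
    refine (map_eq_map_of_valuation_sub_lt hχ hγ.le hvan (hcong.trans_le ?_)).symm.trans hχe₁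
    gcongr
    exact pow_le_of_le_one zero_le hγ.le two_ne_zero
  have hmem₂ : (1, χ (e₂ - e₁)) ∈ descentImage χ e₁ e₂ := by simp [descentImage, hχe₂]
  suffices hmem : (0, 1) ∈ descentImage χ e₁ e₂ from
    addSubgroup_zmod_prod_eq_top (AddSubgroup.subset_closure hmem₂)
      (AddSubgroup.subset_closure hmem)
  rcases eq_or_ne (χ (-1)) 0 with hneg | hneg
  · have hmem₀ : (χ (e₁ * e₂), χ (-e₁)) ∈ descentImage χ e₁ e₂ := by simp [descentImage]
    rwa [hχ he₁ he₂, map_neg_eq_add hχ he₁, hneg, hχe₁, hχe₂, zero_add,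
      CharTwo.add_self_eq_zero] at hmem₀
  · obtain ⟨s, hs, hχ1, hχs⟩ := exists_valuation_eq_and_map_one_add_eq_one_and_map_eq_zero hχ h2 hγ
      hvan hnonvan (Fin.eq_one_of_ne_zero _ hneg)
    exact zero_one_mem_descentImage_of_map_one_add_eq_one hχ hγ hvan hcong hχe₂ hs hχ1 hχs

end Descent

/-- Case (ii) of Proposition 4:  `K` a finite extension of `ℚ₂` with normalized
valuation `v`, `L = K(√d)` a ramified quadratic extension, `χ : K^× → ℤ/2ℤ`
the homomorphism with kernel `N_{L|K}(L^×)`, factoring through `U₁/U_{n+1}`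
but not through `U₁/U_n` (`n ≥ 1`), and `e₁, e₂` distinct `1`-units.
If `e₁/e₂ ∈ U_{2n+1}` and `χ(e₁) = 1`, the subgroup of `(ℤ/2ℤ)²` generated by
the image set `Im` is all of `(ℤ/2ℤ)²`. -/
theorem chatelet_descent_image_case_ii
    (K : Type*) [Field K] [Algebra ℚ_[2] K] [FiniteDimensional ℚ_[2] K]
    (w : DValuation K)
    (hext : ∀ x : ℚ_[2], x ≠ 0 →
      w.v (algebraMap ℚ_[2] K x) = w.v (algebraMap ℚ_[2] K 2) * x.valuation)
    (L : Type*) [Field L] [Algebra K L] (hL2 : Module.finrank K L = 2)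
    (d : K) (hd0 : d ≠ 0) (hd : ¬ IsSquare d)
    (hdL : ∃ δ : L, δ ^ 2 = algebraMap K L d)
    (wL : DValuation L)
    (hram : ∀ x : K, x ≠ 0 → wL.v (algebraMap K L x) = 2 * w.v x)
    (χ : K → ZMod 2)
    (hχ : ∀ ⦃x y : K⦄, x ≠ 0 → y ≠ 0 → χ (x * y) = χ x + χ y)
    (hker : ∀ x : K, x ≠ 0 → (χ x = 0 ↔ ∃ y : L, y ≠ 0 ∧ Algebra.norm K y = x))
    (n : ℕ) (hn : 1 ≤ n)
    (hvan : ∀ u : K, w.IsUnit₁ ((n : ℤ) + 1) u → χ u = 0)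
    (hnonvan : ∃ u : K, w.IsUnit₁ (n : ℤ) u ∧ χ u ≠ 0)
    (e₁ e₂ : K) (he₁ : w.IsUnit₁ 1 e₁) (he₂ : w.IsUnit₁ 1 e₂) (hee : e₁ ≠ e₂)
    (hcong : w.IsUnit₁ (2 * (n : ℤ) + 1) (e₁ / e₂))
    (hχe₁ : χ e₁ = 1) :
    AddSubgroup.closure
        (({((0 : ZMod 2), (0 : ZMod 2)), (χ (e₁ * e₂), χ (-e₁)),
            (χ e₁, χ (e₁ * (e₁ - e₂))), (χ e₂, χ (e₂ - e₁))} : Set (ZMod 2 × ZMod 2)) ∪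
          {p : ZMod 2 × ZMod 2 | ∃ x : K, x ≠ 0 ∧ x ≠ e₁ ∧ x ≠ e₂ ∧
            χ (x * (x - e₁) * (x - e₂)) = 0 ∧ p = (χ x, χ (x - e₁))}) =
      (⊤ : AddSubgroup (ZMod 2 × ZMod 2)) := by
  have he₂0 : e₂ ≠ 0 := he₂.ne_zero one_pos
  have h2 : w.toValuation 2 < 1 := w.toValuation_natCast_lt_one (p := 2) hext
  have hγ : WithZero.exp (-(n : ℤ)) < 1 := by rw [← WithZero.exp_zero, WithZero.exp_lt_exp]; omega
  have hcong' : w.toValuation (e₁ - e₂) < WithZero.exp (-(n : ℤ)) ^ 2 * w.toValuation e₂ := by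
    rw [← WithZero.exp_nsmul, nsmul_eq_mul, mul_neg]
    exact (DValuation.isUnit₁_add_one_div_iff he₂0).1 hcong
  exact chatelet_descent_image_case_ii_general hχ h2 hγ
    (fun u hu => hvan u (DValuation.isUnit₁_add_one_iff_toValuation_lt.2 hu))
    (hnonvan.imp fun _ => And.imp_left DValuation.isUnit₁_iff_toValuation_le.1) hee hcong' hχe₁
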